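/- arXiv:2209.00418 — 2 statements merged into one kernel-verified Lean document; each statement's English description precedes it below -/
import Mathlib

section
/- Let δ and δ' be increment functions of size n with δ(i) ≤ δ'(i) for all i, and let P be a Dyck word of size n. Then for every up step u_i of P, the δ-excursion of u_i in P is a prefix of the δ'-excursion of u_i in P. -/
/-!
Common definitions.  A letter of a word is a `Bool`: `true` is an up step `u`,
`false` is a down step `d`.  Positions in words are 0-based.
-/

/-- A (possibly empty) Dyck word: as many `u`'s as `d`'s, and every
prefix has at least as many `u`'s as `d`'s. -/
def IsDyckPath (w : List Bool) : Prop :=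
  w.count true = w.count false ∧ ∀ p, p <+: w → p.count false ≤ p.count true

/-- A Dyck word of size `n`: `n` up steps, `n` down steps, every prefix has
at least as many `u`'s as `d`'s. -/
def IsDyckWord (n : ℕ) (w : List Bool) : Prop :=
  w.count true = n ∧ w.count false = n ∧ ∀ p, p <+: w → p.count false ≤ p.count true

/-- The set of Dyck words of size `n`. -/
def DyckSet (n : ℕ) : Set (List Bool) := {w | IsDyckWord n w}

/-- An increment function: a `{0,1}`-valued function (the paper's `δ : {1,…,n} → {0,1}`;
only the values on `{1,…,n}` are ever used). -/
def IsIncFun (δ : ℕ → ℤ) : Prop := ∀ i, δ i = 0 ∨ δ i = 1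

/-- The 0-based position in `w` of the `i`-th up step `u_i` (`i` is 1-based). -/
def upPos (w : List Bool) (i : ℕ) : ℕ :=
  ((List.range w.length).filter fun q => w.getD q false = true).getD (i - 1) 0

/-- `h_i(w)`: the (1-based, between 1 and 2n) position of the up step `u_i` in `w`. -/
def hpos (w : List Bool) (i : ℕ) : ℕ := upPos w i + 1

/-- The change of δ-altitude produced by the letter at position `q` of `w`:
the up step `u_i` contributes `δ i`, a down step contributes `-1`. -/
def stepVal (δ : ℕ → ℤ) (w : List Bool) (q : ℕ) : ℤ :=
  if w.getD q false = true then δ ((w.take (q + 1)).count true) else -1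

/-- The δ-elevation of the factor of `w` occupying positions `a, …, b-1`. -/
def elev (δ : ℕ → ℤ) (w : List Bool) (a b : ℕ) : ℤ :=
  ∑ q ∈ Finset.Ico a b, stepVal δ w q

/-- `C` is the δ-excursion of the up step of `w` at position `p`:
the smallest (nonempty) factor of `w` starting at `p` whose δ-elevation is `0`. -/
def IsDeltaExcAt (δ : ℕ → ℤ) (w : List Bool) (p : ℕ) (C : List Bool) : Prop :=
  w.getD p false = true ∧
  ∃ m, 0 < m ∧ p + m ≤ w.length ∧ C = (w.drop p).take m ∧
    elev δ w p (p + m) = 0 ∧ ∀ m', 0 < m' → m' < m → elev δ w p (p + m') ≠ 0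

/-- `C` is the excursion of the up step of `w` at position `p`: the smallest factor
of `w` starting at `p` that is itself a Dyck word. -/
def IsExcursionAt (w : List Bool) (p : ℕ) (C : List Bool) : Prop :=
  w.getD p false = true ∧
  ∃ m, 0 < m ∧ p + m ≤ w.length ∧ C = (w.drop p).take m ∧ IsDyckPath C ∧
    ∀ m', 0 < m' → m' < m → ¬ IsDyckPath ((w.drop p).take m')

/-- `ℓ_i(w; δ)`: the length of the δ-excursion of `u_i` in `w`. -/
noncomputable def excLen (δ : ℕ → ℤ) (w : List Bool) (i : ℕ) : ℕ :=
  sInf {m | 0 < m ∧ elev δ w (upPos w i) (upPos w i + m) = 0}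

/-- `Q` is the δ-rotation of `P` at some up step: `P = A d C B` with `d u_i` a valley
and `C` the δ-excursion of `u_i`, and `Q = A C d B`. -/
def DeltaRot (δ : ℕ → ℤ) (P Q : List Bool) : Prop :=
  ∃ A C B, P = A ++ false :: (C ++ B) ∧ Q = A ++ (C ++ false :: B) ∧
    IsDeltaExcAt δ P (A.length + 1) C

/-- The alt-Tamari order `Tam^δ`: reflexive transitive closure of δ-rotations. -/
def altLE (δ : ℕ → ℤ) : List Bool → List Bool → Prop :=
  Relation.ReflTransGen (DeltaRot δ)

/-- The Tamari order: the alt-Tamari order for `δ ≡ 1` (the δ-excursion of any up step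
is then its excursion). -/
def tamLE : List Bool → List Bool → Prop := altLE fun _ => 1

/-- The height (number of `u`'s minus number of `d`'s) of the length-`j` prefix of `w`. -/
def prefHeight (w : List Bool) (j : ℕ) : ℤ :=
  ((w.take j).count true : ℤ) - ((w.take j).count false : ℤ)

/-- The Dyck (inclusion) order: every prefix height of `P` is at most that of `Q`. -/
def dyckLE (P Q : List Bool) : Prop := ∀ j, prefHeight P j ≤ prefHeight Q j

/-- Strict version of a relation `le`. -/
def ltOf (le : List Bool → List Bool → Prop) (P Q : List Bool) : Prop :=
  le P Q ∧ ¬ le Q P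

/-- There is a strict chain `P = c 0 < c 1 < ⋯ < c k = Q` inside `S`. -/
def HasChainIn (S : Set (List Bool)) (le : List Bool → List Bool → Prop)
    (P Q : List Bool) (k : ℕ) : Prop :=
  ∃ c : ℕ → List Bool, c 0 = P ∧ c k = Q ∧ (∀ i ≤ k, c i ∈ S) ∧
    ∀ i < k, ltOf le (c i) (c (i + 1))

/-- The interval `[P,Q]` of the poset `(S, le)` has height `k`: `k` is the maximal
length of a chain from `P` to `Q`. -/
def IntervalHeight (S : Set (List Bool)) (le : List Bool → List Bool → Prop)
    (P Q : List Bool) (k : ℕ) : Prop :=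
  HasChainIn S le P Q k ∧ ∀ m, HasChainIn S le P Q m → m ≤ k

/-- The interval `[P,Q]` of the poset `(S, le)` is linear: it is totally ordered. -/
def LinearInterval (S : Set (List Bool)) (le : List Bool → List Bool → Prop)
    (P Q : List Bool) : Prop :=
  P ∈ S ∧ Q ∈ S ∧ le P Q ∧
  ∀ R R', R ∈ S → R' ∈ S → le P R → le R Q → le P R' → le R' Q → le R R' ∨ le R' R

/-- `Q` covers `P` in the poset `(S, le)`. -/
def CovIn (S : Set (List Bool)) (le : List Bool → List Bool → Prop)
    (P Q : List Bool) : Prop :=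
  P ∈ S ∧ Q ∈ S ∧ ltOf le P Q ∧ ∀ R ∈ S, ¬ (ltOf le P R ∧ ltOf le R Q)

/-- The number of valleys (factors `du`) of `w`. -/
def valleys (w : List Bool) : ℕ :=
  ((List.range w.length).filter fun q => !w.getD q true && w.getD (q + 1) false).length

/-!
A letter lowers the altitude by at most one, so an elevation that is nonnegative after an up step
cannot become nonpositive without vanishing on the way. Raising the increments raises every
elevation: where the larger elevation vanishes the smaller one is nonpositive, hence has vanished
at or before that point.
-/

theorem exists_mem_Icc_eq_of_le_succ_add_one {f : ℕ → ℤ} {a b : ℕ} {t : ℤ} (hab : a ≤ b)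
    (hstep : ∀ k ∈ Set.Ico a b, f k ≤ f (k + 1) + 1) (ha : t ≤ f a) (hb : f b ≤ t) :
    ∃ k ∈ Set.Icc a b, f k = t := by
  induction b, hab using Nat.le_induction with
  | base => exact ⟨a, Set.left_mem_Icc.2 le_rfl, hb.antisymm ha⟩
  | succ b hab ih =>
    rcases le_or_gt (f b) t with hle | hlt
    · obtain ⟨k, hk, hfk⟩ := ih (fun k hk => hstep k ⟨hk.1, hk.2.trans b.lt_succ_self⟩) hle
      exact ⟨k, ⟨hk.1, hk.2.trans b.le_succ⟩, hfk⟩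
    · have hdrop : f b ≤ f (b + 1) + 1 := hstep b ⟨hab, b.lt_succ_self⟩
      exact ⟨b + 1, Set.right_mem_Icc.2 (hab.trans b.le_succ), by omega⟩

theorem IsIncFun.nonneg {δ : ℕ → ℤ} (hδ : IsIncFun δ) : 0 ≤ δ := fun i =>
  (hδ i).elim Eq.ge fun h => h ▸ zero_le_one

theorem stepVal_mono {δ δ' : ℕ → ℤ} (hle : δ ≤ δ') (w : List Bool) (q : ℕ) :
    stepVal δ w q ≤ stepVal δ' w q := by
  unfold stepVal
  split_ifs
  · exact hle _
  · exact le_rfl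

theorem elev_mono {δ δ' : ℕ → ℤ} (hle : δ ≤ δ') (w : List Bool) (a b : ℕ) :
    elev δ w a b ≤ elev δ' w a b :=
  Finset.sum_le_sum fun q _ => stepVal_mono hle w q

theorem elev_self_succ (δ : ℕ → ℤ) (w : List Bool) (q : ℕ) :
    elev δ w q (q + 1) = stepVal δ w q := by
  rw [elev, Nat.Ico_succ_singleton, Finset.sum_singleton]

theorem elev_succ (δ : ℕ → ℤ) (w : List Bool) {a b : ℕ} (hab : a ≤ b) :
    elev δ w a (b + 1) = elev δ w a b + stepVal δ w b :=
  Finset.sum_Ico_succ_top hab _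

theorem stepVal_nonneg {δ : ℕ → ℤ} (hδ : 0 ≤ δ) {w : List Bool} {q : ℕ}
    (hq : w.getD q false = true) : 0 ≤ stepVal δ w q := by
  rw [stepVal, if_pos hq]
  exact hδ _

theorem neg_one_le_stepVal {δ : ℕ → ℤ} (hδ : 0 ≤ δ) (w : List Bool) (q : ℕ) :
    -1 ≤ stepVal δ w q := by
  by_cases hq : w.getD q false = true
  · exact neg_one_lt_zero.le.trans (stepVal_nonneg hδ hq)
  · rw [stepVal, if_neg hq]

theorem exists_elev_eq_zero_of_elev_nonpos {δ : ℕ → ℤ} (hδ : 0 ≤ δ) {w : List Bool} {p m : ℕ}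
    (hp : w.getD p false = true) (hm : 0 < m) (helev : elev δ w p (p + m) ≤ 0) :
    ∃ k, 0 < k ∧ k ≤ m ∧ elev δ w p (p + k) = 0 := by
  have hstart : 0 ≤ elev δ w p (p + 1) := by
    rw [elev_self_succ]
    exact stepVal_nonneg hδ hp
  have hstep (k : ℕ) : elev δ w p (p + k) ≤ elev δ w p (p + (k + 1)) + 1 := by
    have hsucc : elev δ w p (p + (k + 1)) = elev δ w p (p + k) + stepVal δ w (p + k) :=
      elev_succ δ w (Nat.le_add_right p k)
    have hletter : -1 ≤ stepVal δ w (p + k) := neg_one_le_stepVal hδ w (p + k)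
    omega
  obtain ⟨k, ⟨hk, hkm⟩, hzero⟩ :=
    exists_mem_Icc_eq_of_le_succ_add_one hm (fun k _ => hstep k) hstart helev
  exact ⟨k, hk, hkm, hzero⟩

theorem stmt12_general {δ δ' : ℕ → ℤ} (hδ : 0 ≤ δ) (hle : δ ≤ δ') {w : List Bool} {p : ℕ}
    {C C' : List Bool} (hC : IsDeltaExcAt δ w p C) (hC' : IsDeltaExcAt δ' w p C') :
    C <+: C' := by
  obtain ⟨hp, m, -, -, rfl, -, hmin⟩ := hC
  obtain ⟨-, m', hm', -, rfl, hzero', -⟩ := hC'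
  have hnonpos : elev δ w p (p + m') ≤ 0 := (elev_mono hle w p (p + m')).trans_eq hzero'
  obtain ⟨k, hk, hkm', hzero⟩ := exists_elev_eq_zero_of_elev_nonpos hδ hp hm' hnonpos
  have hmk : m ≤ k := not_lt.1 fun hkm => hmin k hk hkm hzero
  exact List.take_prefix_take_left (hmk.trans hkm')

/-- if `δ ≤ δ'` pointwise, then every δ-excursion is a prefix of the
corresponding δ'-excursion. -/
theorem stmt12 (n : ℕ) (δ δ' : ℕ → ℤ) (hδ : IsIncFun δ) (hδ' : IsIncFun δ')
    (hle : ∀ i, δ i ≤ δ' i) (P : List Bool) (hP : IsDyckWord n P)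
    (i : ℕ) (hi1 : 1 ≤ i) (hin : i ≤ n) (C C' : List Bool)
    (hC : IsDeltaExcAt δ P (upPos P i) C)
    (hC' : IsDeltaExcAt δ' P (upPos P i) C') :
    C <+: C' :=
  stmt12_general hδ.nonneg hle hC hC'
end

section
/- Let δ and δ' be increment functions of size n with δ(i) ≤ δ'(i) for all i. Then the alt-Tamari poset Tam^δ_n refines Tam^{δ'}_n: for all Dyck words P, Q of size n, if P ≤ Q in Tam^{δ'}_n then P ≤ Q in Tam^δ_n; in particular, if Q covers P in Tam^{δ'}_n then P < Q in Tam^δ_n. -/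
/-!
A `δ'`-rotation moves a down step past a `δ'`-excursion `C`. Every prefix of `C` has nonnegative
`δ'`-elevation, since otherwise the path would have returned to `0` before the end of `C`; hence
every suffix of `C` has nonpositive `δ'`-elevation, and a fortiori nonpositive `δ`-elevation.
Under the latter condition the down step can be moved past `C` by `δ`-rotations: if it faces a
down step there is nothing to do, and if it faces an up step, this step has a `δ`-excursion
contained in what remains of `C`, past which it rotates. Strict relations stay strict because
rotations increase words lexicographically.
-/

/-- The `δ`-elevation of a word regarded as a factor preceded by exactly `k` up steps, so that its
first up step is `u_{k+1}`. Unlike `elev`, it does not refer to the ambient word. -/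
def wordElev (δ : ℕ → ℤ) : ℕ → List Bool → ℤ
  | _, [] => 0
  | k, true :: w => δ (k + 1) + wordElev δ (k + 1) w
  | k, false :: w => -1 + wordElev δ k w

/-- The word `C`, regarded as a factor preceded by exactly `k` up steps, is the `δ`-excursion of
its first letter. This is `IsDeltaExcAt` without reference to the ambient word. -/
def IsDeltaExcursion (δ : ℕ → ℤ) (k : ℕ) (C : List Bool) : Prop :=
  C.head? = some true ∧ wordElev δ k C = 0 ∧
    ∀ U, U <+: C → U ≠ [] → wordElev δ k U = 0 → U = C

/-- Every suffix of the word `C`, regarded as a factor preceded by exactly `k` up steps, has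
nonpositive `δ`-elevation. This is the condition under which a down step can be moved past `C` by
`δ`-rotations. -/
def HasNonposSuffixes (δ : ℕ → ℤ) (k : ℕ) (C : List Bool) : Prop :=
  ∀ X Y, X ++ Y = C → wordElev δ (k + X.count true) Y ≤ 0

theorem head?_eq_of_isPrefix {α : Type*} {U W : List α} (h : U <+: W) (hU : U ≠ []) :
    U.head? = W.head? := by
  obtain ⟨V, rfl⟩ := h
  exact (List.head?_append_of_ne_nil U hU).symm

section Elevation

variable {δ δ' : ℕ → ℤ}

theorem wordElev_append (δ : ℕ → ℤ) (k : ℕ) (X Y : List Bool) :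
    wordElev δ k (X ++ Y) = wordElev δ k X + wordElev δ (k + X.count true) Y := by
  induction X generalizing k with
  | nil => simp [wordElev]
  | cons c X ih => cases c <;> simp [wordElev, ih, add_assoc, add_comm 1]

theorem wordElev_mono (hle : ∀ i, δ i ≤ δ' i) (k : ℕ) (w : List Bool) :
    wordElev δ k w ≤ wordElev δ' k w := by
  induction w generalizing k with
  | nil => exact le_rfl
  | cons c w ih =>
    cases c
    · exact add_le_add_right (ih k) (-1)
    · exact add_le_add (hle (k + 1)) (ih (k + 1))

theorem neg_one_le_wordElev_singleton (hδ : ∀ i, 0 ≤ δ i) (k : ℕ) (c : Bool) :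
    -1 ≤ wordElev δ k [c] := by
  have := hδ (k + 1)
  cases c <;> simp only [wordElev] <;> omega

theorem elev_append_of_isPrefix (δ : ℕ → ℤ) (X : List Bool) {U W : List Bool} (h : U <+: W) :
    elev δ (X ++ W) X.length (X.length + U.length) = wordElev δ (X.count true) U := by
  obtain ⟨V, rfl⟩ := h
  induction U generalizing X with
  | nil => simp [elev, wordElev]
  | cons c U ih =>
    have htail : elev δ (X ++ (c :: U ++ V)) (X.length + 1) (X.length + 1 + U.length) =
        wordElev δ ((X ++ [c]).count true) U := by
      simpa using ih (X ++ [c])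
    rw [elev, List.length_cons, Finset.sum_eq_sum_Ico_succ_bot (by omega), ← add_assoc,
      add_right_comm, ← elev, htail]
    cases c <;> simp [stepVal, wordElev, List.take_append, List.take_of_length_le]

end Elevation

section Excursion

variable {δ : ℕ → ℤ} {k : ℕ} {C : List Bool}

theorem isDeltaExcAt_append_iff (δ : ℕ → ℤ) (A C B : List Bool) :
    IsDeltaExcAt δ (A ++ (C ++ B)) A.length C ↔ IsDeltaExcursion δ (A.count true) C := by
  have helev {U : List Bool} (hU : U <+: C) :
      elev δ (A ++ (C ++ B)) A.length (A.length + U.length) = wordElev δ (A.count true) U :=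
    elev_append_of_isPrefix δ A (hU.trans (C.prefix_append B))
  constructor
  · rintro ⟨hup, m, hm, hmlen, hC, h0, hmin⟩
    obtain rfl : C.length = m := by
      have := congrArg List.length hC
      simp only [List.length_append, List.drop_left, List.length_take] at this hmlen
      omega
    refine ⟨?_, by rwa [helev C.prefix_rfl] at h0, fun U hU hne hU0 => ?_⟩
    · obtain ⟨c, D, rfl⟩ := List.exists_cons_of_length_pos hm
      simpa using hup
    · by_contra hUC
      exact hmin U.length (List.length_pos_iff.2 hne)
        (hU.length_le.lt_of_ne fun h => hUC (hU.eq_of_length h)) (by rw [helev hU, hU0])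
  · rintro ⟨hhead, h0, hmin⟩
    obtain ⟨C, rfl⟩ := List.head?_eq_some_iff.1 hhead
    refine ⟨by simp, (true :: C).length, C.length.succ_pos, by simp, by simp,
      by rw [helev List.prefix_rfl, h0], fun m hm hmC hm0 => ?_⟩
    have hlen : ((true :: C).take m).length = m := List.length_take_of_le hmC.le
    have hpre := List.take_prefix m (true :: C)
    rw [← hlen, helev hpre] at hm0
    have heq := hmin _ hpre (List.length_pos_iff.1 (by omega)) hm0
    rw [heq] at hlen
    omega

theorem deltaRot_iff {P Q : List Bool} :
    DeltaRot δ P Q ↔ ∃ A C B, P = A ++ false :: (C ++ B) ∧ Q = A ++ (C ++ false :: B) ∧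
      IsDeltaExcursion δ (A.count true) C := by
  refine exists_congr fun A => exists_congr fun C => exists_congr fun B =>
    and_congr_right fun hP => and_congr_right fun _ => ?_
  subst hP
  simpa using isDeltaExcAt_append_iff δ (A ++ [false]) C B

theorem exists_isDeltaExcursion_prefix (hδ : ∀ i, 0 ≤ δ i) {w : List Bool}
    (hhead : w.head? = some true) (hw : wordElev δ k w ≤ 0) :
    ∃ C, C <+: w ∧ IsDeltaExcursion δ k C := by
  induction hn : w.length using Nat.strong_induction_on generalizing w with
  | _ n ih =>
    by_cases hshort : ∃ U, U <+: w ∧ U ≠ [] ∧ U ≠ w ∧ wordElev δ k U ≤ 0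
    · obtain ⟨U, hUw, hne, hneq, hU⟩ := hshort
      have hlt : U.length < w.length :=
        hUw.length_le.lt_of_ne fun h => hneq (hUw.eq_of_length h)
      obtain ⟨C, hCU, hC⟩ := ih U.length (hn ▸ hlt) ((head?_eq_of_isPrefix hUw hne).trans hhead)
        hU rfl
      exact ⟨C, hCU.trans hUw, hC⟩
    · push Not at hshort
      -- Steps are at least `-1`, so the first nonempty prefix of nonpositive elevation ends at `0`.
      have hw0 : 0 ≤ wordElev δ k w := by
        obtain rfl | ⟨w', c, rfl⟩ := w.eq_nil_or_concat'
        · exact le_rfl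
        rcases eq_or_ne w' [] with rfl | hne
        · obtain rfl : c = true := by simpa using hhead
          simpa [wordElev] using hδ (k + 1)
        · have hpos := hshort w' (w'.prefix_append [c]) hne (by simp)
          have hstep := neg_one_le_wordElev_singleton hδ (k + w'.count true) c
          rw [wordElev_append]
          omega
      refine ⟨w, List.prefix_rfl, hhead, le_antisymm hw hw0, fun U hUw hne hU => ?_⟩
      by_contra hneq
      exact (hshort U hUw hne hneq).ne' hU

theorem IsDeltaExcursion.wordElev_prefix_nonneg (hC : IsDeltaExcursion δ k C)
    (hδ : ∀ i, 0 ≤ δ i) {X : List Bool} (hX : X <+: C) : 0 ≤ wordElev δ k X := by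
  obtain ⟨hhead, h0, hmin⟩ := hC
  by_contra! hneg
  have hne : X ≠ [] := by rintro rfl; exact hneg.ne rfl
  obtain ⟨D, hDX, hDhead, hD0, -⟩ := exists_isDeltaExcursion_prefix hδ
    ((head?_eq_of_isPrefix hX hne).trans hhead) hneg.le
  obtain rfl : D = C := hmin D (hDX.trans hX) (by rintro rfl; simp at hDhead) hD0
  obtain rfl : X = D := hX.eq_of_length_le hDX.length_le
  exact hneg.ne h0

end Excursion

section NonposSuffixes

variable {δ δ' : ℕ → ℤ} {k : ℕ} {C : List Bool}

theorem IsDeltaExcursion.hasNonposSuffixes (hC : IsDeltaExcursion δ k C) (hδ : ∀ i, 0 ≤ δ i) :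
    HasNonposSuffixes δ k C := by
  rintro X Y rfl
  have hX := hC.wordElev_prefix_nonneg hδ (X.prefix_append Y)
  obtain ⟨-, hXY, -⟩ := hC
  rw [wordElev_append] at hXY
  omega

theorem HasNonposSuffixes.anti (hC : HasNonposSuffixes δ' k C) (hle : ∀ i, δ i ≤ δ' i) :
    HasNonposSuffixes δ k C :=
  fun X Y h => (wordElev_mono hle _ Y).trans (hC X Y h)

theorem HasNonposSuffixes.of_append {X Y : List Bool} (h : HasNonposSuffixes δ k (X ++ Y)) :
    HasNonposSuffixes δ (k + X.count true) Y := by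
  rintro U V rfl
  simpa [add_assoc] using h (X ++ U) V (by simp)

theorem HasNonposSuffixes.altLE_append (hδ : ∀ i, 0 ≤ δ i) {A : List Bool}
    (hC : HasNonposSuffixes δ (A.count true) C) (B : List Bool) :
    altLE δ (A ++ false :: (C ++ B)) (A ++ (C ++ false :: B)) := by
  induction hn : C.length using Nat.strong_induction_on generalizing A C with
  | _ n ih =>
    rcases C with _ | ⟨_ | _, C⟩
    · exact .refl
    · have hC' : HasNonposSuffixes δ ((A ++ [false]).count true) C := by
        simpa using hC.of_append (X := [false])
      simpa using ih C.length (by simp [← hn]) hC' rfl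
    · obtain ⟨D, ⟨E, hDE⟩, hD⟩ := exists_isDeltaExcursion_prefix hδ rfl (hC [] _ rfl)
      rw [← hDE] at hC hn ⊢
      have hrot : DeltaRot δ (A ++ false :: (D ++ E ++ B)) (A ++ (D ++ false :: (E ++ B))) :=
        deltaRot_iff.2 ⟨A, D, E ++ B, by simp, rfl, hD⟩
      have hE : HasNonposSuffixes δ ((A ++ D).count true) E := by simpa using hC.of_append
      have hlt : E.length < n := by
        have hne : D ≠ [] := by rintro rfl; simp [IsDeltaExcursion] at hD
        simpa [← hn, List.length_pos_iff] using hne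
      have hEmove : altLE δ (A ++ (D ++ false :: (E ++ B))) (A ++ (D ++ E ++ false :: B)) := by
        simpa using ih E.length hlt hE rfl
      exact .head hrot hEmove

end NonposSuffixes

section Order

variable {δ δ' : ℕ → ℤ} {P Q : List Bool}

theorem DeltaRot.altLE_of_le (h : DeltaRot δ' P Q) (hδ : ∀ i, 0 ≤ δ i)
    (hle : ∀ i, δ i ≤ δ' i) : altLE δ P Q := by
  obtain ⟨A, C, B, rfl, rfl, hC⟩ := deltaRot_iff.1 h
  have hδ' : ∀ i, 0 ≤ δ' i := fun i => (hδ i).trans (hle i)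
  exact ((hC.hasNonposSuffixes hδ').anti hle).altLE_append hδ B

theorem altLE.anti (h : altLE δ' P Q) (hδ : ∀ i, 0 ≤ δ i) (hle : ∀ i, δ i ≤ δ' i) :
    altLE δ P Q :=
  Relation.reflTransGen_closed (fun _ _ hrot => hrot.altLE_of_le hδ hle) _ _ h

theorem DeltaRot.lt (h : DeltaRot δ P Q) : P < Q := by
  obtain ⟨A, C, B, rfl, rfl, hC⟩ := deltaRot_iff.1 h
  obtain ⟨C, rfl⟩ := List.head?_eq_some_iff.1 hC.1
  exact List.Lex.append_left _ (.rel Bool.false_lt_true) A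

theorem altLE.le (h : altLE δ P Q) : P ≤ Q := by
  induction h with
  | refl => exact le_rfl
  | tail _ hrot ih => exact ih.trans hrot.lt.le

theorem altLE.antisymm (hPQ : altLE δ P Q) (hQP : altLE δ Q P) : P = Q :=
  le_antisymm hPQ.le hQP.le

theorem ltOf_altLE_iff : ltOf (altLE δ) P Q ↔ altLE δ P Q ∧ P ≠ Q :=
  and_congr_right fun hPQ => not_congr ⟨hPQ.antisymm, fun h => h ▸ .refl⟩

end Order

theorem stmt13_general {δ δ' : ℕ → ℤ} (hδ : ∀ i, 0 ≤ δ i) (hle : ∀ i, δ i ≤ δ' i) :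
    (∀ P Q, altLE δ' P Q → altLE δ P Q) ∧
      (∀ P Q, ltOf (altLE δ') P Q → ltOf (altLE δ) P Q) := by
  have hrefine P Q (h : altLE δ' P Q) : altLE δ P Q := h.anti hδ hle
  refine ⟨hrefine, fun P Q h => ?_⟩
  obtain ⟨hPQ, hne⟩ := ltOf_altLE_iff.1 h
  exact ltOf_altLE_iff.2 ⟨hrefine P Q hPQ, hne⟩

/-- if `δ ≤ δ'` pointwise, then `Tam^δ_n` refines `Tam^{δ'}_n`; in
particular any covering relation of `Tam^{δ'}_n` is a strict relation of `Tam^δ_n`. -/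
theorem stmt13 (n : ℕ) (δ δ' : ℕ → ℤ) (hδ : IsIncFun δ) (hδ' : IsIncFun δ')
    (hle : ∀ i, δ i ≤ δ' i) :
    (∀ P Q : List Bool, IsDyckWord n P → IsDyckWord n Q →
      altLE δ' P Q → altLE δ P Q) ∧
    (∀ P Q : List Bool, IsDyckWord n P → IsDyckWord n Q →
      CovIn (DyckSet n) (altLE δ') P Q → ltOf (altLE δ) P Q) := by
  have hδ0 : ∀ i, 0 ≤ δ i := fun i => by rcases hδ i with h | h <;> simp [h]
  obtain ⟨hrefine, hstrict⟩ := stmt13_general hδ0 hle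
  exact ⟨fun P Q _ _ => hrefine P Q, fun P Q _ _ ⟨_, _, hlt, _⟩ => hstrict P Q hlt⟩
end
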